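/- arXiv:2411.13068 — 2 statements merged into one kernel-verified Lean document; each statement's English description precedes it below -/
import Mathlib

section
/- In the critical case (r_n → 1 - 1/m), as n → ∞: r_n = 1 - 1/m + 2/(m n) - 4(m+1) log n/(3 m (m-1) n^2) + o(log n / n^2); that is, (r_n - (1 - 1/m) - 2/(m n) + 4(m+1) log n/(3 m (m-1) n^2)) · n^2/log n → 0. -/
open Filter Finset Topology

/-!
The reciprocals `s n = 1 / r n` satisfy the scalar second-order recursion
`s (n + 2) - s (n + 1) = m (1 - r (n + 1)) (s (n + 1) - s n)`. In the critical case,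
`u n = 1 - (1 - 1 / m) s n` therefore decreases to `0` and its decrements `d n = u n - u (n + 1)`
obey `d (n + 1) = (1 - u (n + 1) ψ (u (n + 1))) d n` with `ψ t = (m - 1) / (1 - t)`. Reading
`d n - d (n + 1) = u (n + 1) ψ (u (n + 1)) (u n - u (n + 1))` as a discrete derivative of `d` with
respect to `u`, three applications of the Stolz–Cesàro theorem at `0` expand `d` in powers of `u`
up to `u ^ 3`. The increments of `1 / u` are then known up to `o(u)`. With `L = 1 - 1 / m`, the
sequences `1 / u n` and `L / (r n - L)` differ by the constant `1`, so their increments agree, and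
two applications of the Stolz–Cesàro theorem at `∞` give `1 / (r n - L)` up to `o(log n)`.
-/

section StolzCesaro

lemma eventually_le_of_tendsto_of_eventually_le_succ {α : Type*} [TopologicalSpace α] [Preorder α]
    [ClosedIciTopology α] {w : ℕ → α} {a : α} (hw : Tendsto w atTop (𝓝 a))
    (h : ∀ᶠ n in atTop, w n ≤ w (n + 1)) : ∀ᶠ n in atTop, w n ≤ a := by
  obtain ⟨N, hN⟩ := eventually_atTop.1 h
  filter_upwards [eventually_ge_atTop N] with n hn
  refine ge_of_tendsto hw ?_
  filter_upwards [eventually_ge_atTop n] with k hk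
  exact Nat.le_induction le_rfl (fun j hj hle => hle.trans (hN j (hn.trans hj))) k hk

lemma eventually_le_mul_of_eventually_sub_succ_le {u v : ℕ → ℝ} {c : ℝ}
    (hu : Tendsto u atTop (𝓝 0)) (hv : Tendsto v atTop (𝓝 0))
    (h : ∀ᶠ n in atTop, u n - u (n + 1) ≤ c * (v n - v (n + 1))) :
    ∀ᶠ n in atTop, u n ≤ c * v n := by
  have hw : Tendsto (fun n => u n - c * v n) atTop (𝓝 0) := by
    simpa using hu.sub (hv.const_mul c)
  have hincr : ∀ᶠ n in atTop, u n - c * v n ≤ u (n + 1) - c * v (n + 1) := by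
    filter_upwards [h] with n hn
    linarith
  simpa using eventually_le_of_tendsto_of_eventually_le_succ hw hincr

lemma lt_of_strictAnti_of_tendsto {α : Type*} [TopologicalSpace α] [Preorder α]
    [ClosedIicTopology α] {v : ℕ → α} {l : α} (hv : StrictAnti v) (hl : Tendsto v atTop (𝓝 l))
    (n : ℕ) : l < v n :=
  (le_of_tendsto hl ((eventually_ge_atTop (n + 1)).mono fun _ h => hv.antitone h)).trans_lt
    (hv n.lt_succ_self)

theorem tendsto_div_of_tendsto_sub_div_sub_of_tendsto_zero {u v : ℕ → ℝ} {l : ℝ}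
    (hv : StrictAnti v) (hv₀ : Tendsto v atTop (𝓝 0)) (hu₀ : Tendsto u atTop (𝓝 0))
    (h : Tendsto (fun n => (u n - u (n + 1)) / (v n - v (n + 1))) atTop (𝓝 l)) :
    Tendsto (fun n => u n / v n) atTop (𝓝 l) := by
  have hv_pos := lt_of_strictAnti_of_tendsto hv hv₀
  have hdec (n : ℕ) : 0 < v n - v (n + 1) := sub_pos.2 (hv n.lt_succ_self)
  refine tendsto_order.2 ⟨fun a ha => ?_, fun a ha => ?_⟩
  · obtain ⟨c, hac, hcl⟩ := exists_between ha
    have hle : ∀ᶠ n in atTop, -u n ≤ -c * v n := by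
      refine eventually_le_mul_of_eventually_sub_succ_le (by simpa using hu₀.neg) hv₀ ?_
      filter_upwards [h.eventually_const_lt hcl] with n hn
      linarith [(lt_div_iff₀ (hdec n)).1 hn]
    filter_upwards [hle] with n hn
    exact hac.trans_le ((le_div_iff₀ (hv_pos n)).2 (by linarith))
  · obtain ⟨c, hlc, hca⟩ := exists_between ha
    have hle : ∀ᶠ n in atTop, u n ≤ c * v n := by
      refine eventually_le_mul_of_eventually_sub_succ_le hu₀ hv₀ ?_
      filter_upwards [h.eventually_lt_const hlc] with n hn
      exact ((div_lt_iff₀ (hdec n)).1 hn).le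
    filter_upwards [hle] with n hn
    exact ((div_le_iff₀ (hv_pos n)).2 hn).trans_lt hca

theorem tendsto_div_of_tendsto_sub_div_sub_of_tendsto_atTop {u v : ℕ → ℝ} {l : ℝ}
    (hv : StrictMono v) (hv_top : Tendsto v atTop atTop)
    (h : Tendsto (fun n => (u (n + 1) - u n) / (v (n + 1) - v n)) atTop (𝓝 l)) :
    Tendsto (fun n => u n / v n) atTop (𝓝 l) := by
  have hinc (n : ℕ) : 0 < v (n + 1) - v n := sub_pos.2 (hv n.lt_succ_self)
  have hlittle : (fun n => (u (n + 1) - u n) - l * (v (n + 1) - v n)) =o[atTop]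
      fun n => v (n + 1) - v n := by
    refine (Asymptotics.isLittleO_iff_tendsto fun n hn => absurd hn (hinc n).ne').2 ?_
    refine (tendsto_sub_nhds_zero_iff.2 h).congr fun n => ?_
    rw [sub_div _ (l * _), mul_div_cancel_right₀ _ (hinc n).ne']
  have hv_sub : Tendsto (fun n => v n - v 0) atTop atTop :=
    tendsto_atTop_add_const_right atTop (-v 0) hv_top
  have hsum := hlittle.sum_range (fun n => (hinc n).le) (by simpa only [sum_range_sub] using hv_sub)
  simp only [sum_sub_distrib (fun n => u (n + 1) - u n), ← mul_sum, sum_range_sub] at hsum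
  have hquot : Tendsto (fun n => (v n - v 0) / v n) atTop (𝓝 1) := by
    have hsub := (hv_top.const_div_atTop (v 0)).const_sub 1
    rw [sub_zero] at hsub
    refine hsub.congr' ?_
    filter_upwards [hv_top.eventually_ne_atTop 0] with n hn
    rw [sub_div, div_self hn]
  have hlim := ((hsum.tendsto_div_nhds_zero.add_const l).mul hquot).add
    (hv_top.const_div_atTop (u 0))
  simp only [zero_add, mul_one, add_zero] at hlim
  refine hlim.congr' ?_
  filter_upwards [hv_top.eventually_gt_atTop 0, hv_sub.eventually_gt_atTop 0] with n hn hn'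
  field_simp
  ring

lemma tendsto_div_log_of_tendsto_mul_sub {g : ℕ → ℝ} {l : ℝ}
    (h : Tendsto (fun n : ℕ => n * (g (n + 1) - g n)) atTop (𝓝 l)) :
    Tendsto (fun n : ℕ => g n / Real.log n) atTop (𝓝 l) := by
  have hlog : Tendsto (fun n : ℕ => n * (Real.log (n + 1 : ℕ) - Real.log n)) atTop (𝓝 1) := by
    refine ((Real.tendsto_mul_log_one_add_div_atTop 1).comp tendsto_natCast_atTop_atTop).congr' ?_
    filter_upwards [eventually_ne_atTop 0] with n hn
    have hn' : (n : ℝ) ≠ 0 := Nat.cast_ne_zero.2 hn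
    rw [← Real.log_div (by positivity) hn', Nat.cast_succ, add_div, div_self hn',
      Function.comp_apply]
  -- The shift makes `log` strictly monotone: `Real.log 0 = Real.log 1 = 0`.
  refine (tendsto_add_atTop_iff_nat 1).1 ?_
  refine tendsto_div_of_tendsto_sub_div_sub_of_tendsto_atTop
    (u := fun n => g (n + 1)) (v := fun n => Real.log (n + 1 : ℕ))
    (strictMono_nat_of_lt_succ fun n => Real.log_lt_log (by positivity) (by simp))
    (Real.tendsto_log_atTop.comp (tendsto_natCast_atTop_atTop.comp (tendsto_add_atTop_nat 1))) ?_
  have hquot := (h.div hlog one_ne_zero).comp (tendsto_add_atTop_nat 1)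
  rw [div_one] at hquot
  exact hquot.congr fun n => mul_div_mul_left _ _ (Nat.cast_ne_zero.2 n.succ_ne_zero)

end StolzCesaro

section InverseIncrements

variable {e : ℕ → ℝ} {α β : ℝ}

lemma tendsto_nat_mul_of_tendsto_inv_succ_sub_inv (hα : α ≠ 0)
    (h : Tendsto (fun n => (e (n + 1))⁻¹ - (e n)⁻¹) atTop (𝓝 α)) :
    Tendsto (fun n : ℕ => n * e n) atTop (𝓝 α⁻¹) := by
  have hdiv : Tendsto (fun n : ℕ => (e n)⁻¹ / n) atTop (𝓝 α) :=
    tendsto_div_of_tendsto_sub_div_sub_of_tendsto_atTop Nat.strictMono_cast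
      tendsto_natCast_atTop_atTop (by simpa using h)
  simpa [div_eq_mul_inv] using hdiv.inv₀ hα

theorem tendsto_sub_mul_sq_div_log_of_tendsto_inv_succ_sub_inv (hα : α ≠ 0) (hne : ∀ n, e n ≠ 0)
    (he : Tendsto e atTop (𝓝 0))
    (h : Tendsto (fun n => ((e (n + 1))⁻¹ - (e n)⁻¹ - α) / e n) atTop (𝓝 β)) :
    Tendsto (fun n : ℕ => (e n - (α * n)⁻¹) * n ^ 2 / Real.log n) atTop (𝓝 (-(β / α ^ 3))) := by
  have hinc : Tendsto (fun n => (e (n + 1))⁻¹ - (e n)⁻¹) atTop (𝓝 α) := by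
    refine tendsto_sub_nhds_zero_iff.1 ?_
    simpa [div_mul_cancel₀ _ (hne _)] using h.mul he
  have hmul := tendsto_nat_mul_of_tendsto_inv_succ_sub_inv hα hinc
  have hinv : Tendsto (fun n : ℕ => ((e n)⁻¹ - α * n) / Real.log n) atTop (𝓝 (α⁻¹ * β)) := by
    refine tendsto_div_log_of_tendsto_mul_sub ((hmul.mul h).congr fun n => ?_)
    rw [mul_assoc, mul_div_cancel₀ _ (hne n)]
    push_cast
    ring
  have hlim := (hmul.mul hinv).const_mul (-α⁻¹)
  rw [show -α⁻¹ * (α⁻¹ * (α⁻¹ * β)) = -(β / α ^ 3) by field_simp] at hlim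
  refine hlim.congr' ?_
  filter_upwards [eventually_ne_atTop 0] with n hn
  have hn' : (n : ℝ) ≠ 0 := Nat.cast_ne_zero.2 hn
  have := hne n
  field_simp
  ring

end InverseIncrements

/-- A strictly decreasing null sequence in which each decrement is obtained from the preceding one
by damping with the factor `1 - t ψ(t)`, where `t` is the current term. This is the form the
critical recursion takes in the coordinate `1 - (1 - 1 / m) / r n`; the damping rate is written
as `t ψ(t)` so that its expansion at `0` is that of `ψ`. -/
structure IsDampedDescent (ψ : ℝ → ℝ) (u : ℕ → ℝ) : Prop where
  strictAnti : StrictAnti u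
  tendsto_zero : Tendsto u atTop (𝓝 0)
  decrement_succ (n : ℕ) :
    u (n + 1) - u (n + 2) = (1 - u (n + 1) * ψ (u (n + 1))) * (u n - u (n + 1))

namespace IsDampedDescent

variable {ψ : ℝ → ℝ} {u : ℕ → ℝ} {b : ℝ}

lemma pos (hu : IsDampedDescent ψ u) (n : ℕ) : 0 < u n :=
  lt_of_strictAnti_of_tendsto hu.strictAnti hu.tendsto_zero n

lemma decrement_pos (hu : IsDampedDescent ψ u) (n : ℕ) : 0 < u n - u (n + 1) :=
  sub_pos.2 (hu.strictAnti n.lt_succ_self)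

lemma strictAnti_pow (hu : IsDampedDescent ψ u) {k : ℕ} (hk : k ≠ 0) :
    StrictAnti fun n => u n ^ k :=
  fun _ n h => pow_lt_pow_left₀ (hu.strictAnti h) (hu.pos n).le hk

lemma tendsto_pow_zero (hu : IsDampedDescent ψ u) {k : ℕ} (hk : k ≠ 0) :
    Tendsto (fun n => u n ^ k) atTop (𝓝 0) := by
  simpa [hk] using hu.tendsto_zero.pow k

lemma tendsto_decrement_zero (hu : IsDampedDescent ψ u) :
    Tendsto (fun n => u n - u (n + 1)) atTop (𝓝 0) := by
  simpa using hu.tendsto_zero.sub (hu.tendsto_zero.comp (tendsto_add_atTop_nat 1))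

lemma decrement_sub_decrement_succ (hu : IsDampedDescent ψ u) (n : ℕ) :
    (u n - u (n + 1)) - (u (n + 1) - u (n + 2)) =
      u (n + 1) * ψ (u (n + 1)) * (u n - u (n + 1)) := by
  rw [hu.decrement_succ]
  ring

lemma tendsto_rate (hu : IsDampedDescent ψ u) (hψ : ContinuousAt ψ 0) :
    Tendsto (fun n => ψ (u (n + 1))) atTop (𝓝 (ψ 0)) :=
  hψ.tendsto.comp (hu.tendsto_zero.comp (tendsto_add_atTop_nat 1))

lemma tendsto_decrement_div (hu : IsDampedDescent ψ u) (hψ : ContinuousAt ψ 0) :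
    Tendsto (fun n => (u n - u (n + 1)) / u n) atTop (𝓝 0) := by
  refine tendsto_div_of_tendsto_sub_div_sub_of_tendsto_zero hu.strictAnti hu.tendsto_zero
    hu.tendsto_decrement_zero ?_
  have hlim := (hu.tendsto_zero.comp (tendsto_add_atTop_nat 1)).mul (hu.tendsto_rate hψ)
  rw [zero_mul] at hlim
  refine hlim.congr fun n => ?_
  rw [hu.decrement_sub_decrement_succ, mul_div_cancel_right₀ _ (hu.decrement_pos n).ne',
    Function.comp_apply]

lemma tendsto_succ_div (hu : IsDampedDescent ψ u) (hψ : ContinuousAt ψ 0) :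
    Tendsto (fun n => u (n + 1) / u n) atTop (𝓝 1) := by
  have hlim := (hu.tendsto_decrement_div hψ).const_sub 1
  rw [sub_zero] at hlim
  refine hlim.congr fun n => ?_
  rw [sub_div, div_self (hu.pos n).ne', sub_sub_cancel]

lemma tendsto_decrement_div_sq (hu : IsDampedDescent ψ u) (hψ : ContinuousAt ψ 0) :
    Tendsto (fun n => (u n - u (n + 1)) / u n ^ 2) atTop (𝓝 (ψ 0 / 2)) := by
  refine tendsto_div_of_tendsto_sub_div_sub_of_tendsto_zero (hu.strictAnti_pow two_ne_zero)
    (hu.tendsto_pow_zero two_ne_zero) hu.tendsto_decrement_zero ?_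
  have hratio := hu.tendsto_succ_div hψ
  have hlim := ((hu.tendsto_rate hψ).mul hratio).div (hratio.const_add 1) (by norm_num)
  rw [mul_one, one_add_one_eq_two] at hlim
  refine hlim.congr fun n => ?_
  have hpos := hu.pos n
  have hpos' := hu.pos (n + 1)
  have hdec := (hu.decrement_pos n).ne'
  rw [hu.decrement_sub_decrement_succ, sq_sub_sq, mul_div_mul_right _ _ hdec, Pi.div_apply]
  field_simp

lemma tendsto_decrement_sub_sq_div_cube (hu : IsDampedDescent ψ u) (hψ : HasDerivAt ψ b 0) :
    Tendsto (fun n => (u n - u (n + 1) - ψ 0 / 2 * u n ^ 2) / u n ^ 3) atTop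
      (𝓝 ((b - ψ 0 ^ 2 / 4) / 3)) := by
  refine tendsto_div_of_tendsto_sub_div_sub_of_tendsto_zero (hu.strictAnti_pow three_ne_zero)
    (hu.tendsto_pow_zero three_ne_zero)
    (by simpa using
      hu.tendsto_decrement_zero.sub ((hu.tendsto_pow_zero two_ne_zero).const_mul (ψ 0 / 2))) ?_
  have hratio := hu.tendsto_succ_div hψ.continuousAt
  have hslope : Tendsto (fun n => (ψ (u (n + 1)) - ψ 0) / u (n + 1)) atTop (𝓝 b) := by
    have hu_ne : Tendsto u atTop (𝓝[≠] 0) :=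
      tendsto_nhdsWithin_iff.2 ⟨hu.tendsto_zero, .of_forall fun n => (hu.pos n).ne'⟩
    refine (hψ.tendsto_slope.comp (hu_ne.comp (tendsto_add_atTop_nat 1))).congr fun n => ?_
    simp only [Function.comp_apply, slope_def_field, sub_zero]
  have hlim := ((hslope.mul (hratio.pow 2)).sub
    ((hu.tendsto_decrement_div_sq hψ.continuousAt).const_mul (ψ 0 / 2))).div
    ((hratio.const_add 1).add (hratio.pow 2)) (by norm_num)
  rw [show (b * 1 ^ 2 - ψ 0 / 2 * (ψ 0 / 2)) / (1 + 1 + 1 ^ 2) = (b - ψ 0 ^ 2 / 4) / 3 by ring]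
    at hlim
  refine hlim.congr fun n => ?_
  have hpos := hu.pos n
  have hpos' := hu.pos (n + 1)
  have hdec := (hu.decrement_pos n).ne'
  have hnum : u n - u (n + 1) - ψ 0 / 2 * u n ^ 2
        - (u (n + 1) - u (n + 2) - ψ 0 / 2 * u (n + 1) ^ 2) =
      (u (n + 1) * (ψ (u (n + 1)) - ψ 0) - ψ 0 / 2 * (u n - u (n + 1))) * (u n - u (n + 1)) := by
    linear_combination hu.decrement_sub_decrement_succ n
  have hden : u n ^ 3 - u (n + 1) ^ 3 =
      (u n ^ 2 + u n * u (n + 1) + u (n + 1) ^ 2) * (u n - u (n + 1)) := by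
    ring
  rw [hnum, hden, mul_div_mul_right _ _ hdec, Pi.div_apply]
  field_simp

theorem tendsto_inv_succ_sub_inv (hu : IsDampedDescent ψ u) (hψ : HasDerivAt ψ b 0) :
    Tendsto (fun n => ((u (n + 1))⁻¹ - (u n)⁻¹ - ψ 0 / 2) / u n) atTop
      (𝓝 (b / 3 + ψ 0 ^ 2 / 6)) := by
  have hratio := hu.tendsto_succ_div hψ.continuousAt
  have hlim := ((hu.tendsto_decrement_sub_sq_div_cube hψ).add
    ((hu.tendsto_decrement_div_sq hψ.continuousAt).const_mul (ψ 0 / 2))).div hratio one_ne_zero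
  rw [show ((b - ψ 0 ^ 2 / 4) / 3 + ψ 0 / 2 * (ψ 0 / 2)) / 1 = b / 3 + ψ 0 ^ 2 / 6 by ring] at hlim
  refine hlim.congr fun n => ?_
  have hpos := hu.pos n
  have hpos' := hu.pos (n + 1)
  simp only [Pi.div_apply]
  field_simp
  ring

end IsDampedDescent

section CriticalOrbit

variable {m : ℝ} {r p : ℕ → ℝ}

lemma one_lt_sub_mul {q : ℝ} (hm : 1 < m) (hq : q < 1) : 1 < m - (m - 1) * q := by
  linarith [mul_pos (sub_pos.2 hm) (sub_pos.2 hq)]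

lemma orbit_pos {l : ℝ} (hm : 1 < m) (hp : ∀ n, p n < 1)
    (hrec_r : ∀ n, r (n + 1) = r n / (m - (m - 1) * p n)) (hl : 0 < l)
    (hrlim : Tendsto r atTop (𝓝 l)) (n : ℕ) : 0 < r n := by
  by_contra! hn
  have hle : ∀ k ≥ n, r k ≤ 0 := fun k hk => by
    induction k, hk using Nat.le_induction with
    | base => exact hn
    | succ k _ ih =>
      rw [hrec_r]
      exact div_nonpos_of_nonpos_of_nonneg ih
        (zero_lt_one.trans (one_lt_sub_mul hm (hp k))).le
  exact hl.not_ge (le_of_tendsto hrlim (eventually_atTop.2 ⟨n, hle⟩))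

lemma orbit_strictAnti (hm : 1 < m) (hr : ∀ n, 0 < r n) (hp : ∀ n, p n < 1)
    (hrec_r : ∀ n, r (n + 1) = r n / (m - (m - 1) * p n)) : StrictAnti r :=
  strictAnti_nat_of_succ_lt fun n => by
    rw [hrec_r]
    exact div_lt_self (hr n) (one_lt_sub_mul hm (hp n))

lemma lt_orbit {l : ℝ} (hm : 1 < m) (hp : ∀ n, p n < 1)
    (hrec_r : ∀ n, r (n + 1) = r n / (m - (m - 1) * p n)) (hl : 0 < l)
    (hrlim : Tendsto r atTop (𝓝 l)) (n : ℕ) : l < r n :=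
  lt_of_strictAnti_of_tendsto
    (orbit_strictAnti hm (orbit_pos hm hp hrec_r hl hrlim) hp hrec_r) hrlim n

lemma orbit_inv_succ_sub_inv_succ (hr : ∀ n, r n ≠ 0)
    (hrec_r : ∀ n, r (n + 1) = r n / (m - (m - 1) * p n))
    (hrec_p : ∀ n, p (n + 1) = 1 - (1 - r (n + 1)) * (1 - r (n + 1) * p n / r n)) (n : ℕ) :
    (r (n + 2))⁻¹ - (r (n + 1))⁻¹ = m * (1 - r (n + 1)) * ((r (n + 1))⁻¹ - (r n)⁻¹) := by
  have hinc (k : ℕ) : (r (k + 1))⁻¹ - (r k)⁻¹ = (m - 1) * (1 - p k) / r k := by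
    rw [hrec_r, inv_div]
    ring
  have hrn := hr n
  have hD : m - (m - 1) * p n ≠ 0 := fun h => hr (n + 1) (by rw [hrec_r, h, div_zero])
  have hq : 1 - p (n + 1) = (1 - r (n + 1)) * (m * (1 - p n) * r (n + 1) / r n) := by
    rw [hrec_p, sub_sub_cancel, hrec_r]
    field_simp
    ring
  rw [hinc (n + 1), hinc n, hq]
  have hrn' := hr (n + 1)
  field_simp

lemma orbit_isDampedDescent (hm : 1 < m) (hp : ∀ n, p n < 1)
    (hrec_r : ∀ n, r (n + 1) = r n / (m - (m - 1) * p n))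
    (hrec_p : ∀ n, p (n + 1) = 1 - (1 - r (n + 1)) * (1 - r (n + 1) * p n / r n))
    (hrlim : Tendsto r atTop (𝓝 (1 - 1 / m))) :
    IsDampedDescent (fun t => (m - 1) / (1 - t)) (fun n => 1 - (1 - 1 / m) * (r n)⁻¹) := by
  have hm₀ : 0 < m := zero_lt_one.trans hm
  have hm₁ : m - 1 ≠ 0 := (sub_pos.2 hm).ne'
  have hL : 0 < 1 - 1 / m := sub_pos.2 ((div_lt_one hm₀).2 hm)
  have hr := orbit_pos hm hp hrec_r hL hrlim
  refine ⟨fun i j hij => ?_, ?_, fun n => ?_⟩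
  · have hinv := inv_strictAnti₀ (hr j) (orbit_strictAnti hm hr hp hrec_r hij)
    exact sub_lt_sub_left (mul_lt_mul_of_pos_left hinv hL) 1
  · simpa only [mul_inv_cancel₀ hL.ne', sub_self] using
      ((hrlim.inv₀ hL.ne').const_mul (1 - 1 / m)).const_sub 1
  · have hfactor : 1 - (1 - (1 - 1 / m) * (r (n + 1))⁻¹) *
        ((m - 1) / (1 - (1 - (1 - 1 / m) * (r (n + 1))⁻¹))) = m * (1 - r (n + 1)) := by
      have hrn := (hr (n + 1)).ne'
      rw [sub_sub_cancel]
      field_simp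
      ring
    rw [hfactor]
    linear_combination (1 - 1 / m) *
      orbit_inv_succ_sub_inv_succ (fun k => (hr k).ne') hrec_r hrec_p n

lemma hasDerivAt_const_div_one_sub_zero (c : ℝ) :
    HasDerivAt (fun t : ℝ => c / (1 - t)) c 0 := by
  simpa [div_eq_mul_inv] using
    (((hasDerivAt_id (0 : ℝ)).const_sub 1).fun_inv (by simp)).const_mul c

lemma inv_one_sub_mul_inv {K : Type*} [Field K] {L x : K} (hx : x ≠ 0) (hxL : x - L ≠ 0) :
    (1 - L * x⁻¹)⁻¹ = 1 + L * (x - L)⁻¹ := by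
  rw [← div_eq_mul_inv, one_sub_div hx, inv_div]
  field_simp
  ring

lemma tendsto_orbit_inv_succ_sub_inv (hm : 1 < m) (hp : ∀ n, p n < 1)
    (hrec_r : ∀ n, r (n + 1) = r n / (m - (m - 1) * p n))
    (hrec_p : ∀ n, p (n + 1) = 1 - (1 - r (n + 1)) * (1 - r (n + 1) * p n / r n))
    (hrlim : Tendsto r atTop (𝓝 (1 - 1 / m))) :
    Tendsto (fun n => ((r (n + 1) - (1 - 1 / m))⁻¹ - (r n - (1 - 1 / m))⁻¹ - m / 2) /
      (r n - (1 - 1 / m))) atTop (𝓝 (m ^ 2 * (m + 1) / (6 * (m - 1)))) := by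
  have hm₀ : m ≠ 0 := (zero_lt_one.trans hm).ne'
  have hm₁ : m - 1 ≠ 0 := (sub_pos.2 hm).ne'
  have hL : 0 < 1 - 1 / m := sub_pos.2 ((div_lt_one (zero_lt_one.trans hm)).2 hm)
  have hgt := lt_orbit hm hp hrec_r hL hrlim
  have hr (k : ℕ) : r k ≠ 0 := (hL.trans (hgt k)).ne'
  have hdescent := orbit_isDampedDescent hm hp hrec_r hrec_p hrlim
  have hlim := (hdescent.tendsto_inv_succ_sub_inv (hasDerivAt_const_div_one_sub_zero (m - 1))).div
    (hrlim.const_mul (1 - 1 / m)) (mul_pos hL hL).ne'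
  have hval : ((m - 1) / 3 + ((m - 1) / (1 - 0)) ^ 2 / 6) / ((1 - 1 / m) * (1 - 1 / m)) =
      m ^ 2 * (m + 1) / (6 * (m - 1)) := by
    field_simp
    ring
  rw [hval] at hlim
  refine hlim.congr fun n => ?_
  have hhalf : (m - 1) / (1 - 0) / 2 = (1 - 1 / m) * (m / 2) := by
    field_simp
    ring
  have hinv (k : ℕ) := inv_one_sub_mul_inv (hr k) (sub_pos.2 (hgt k)).ne'
  have hden : (1 - (1 - 1 / m) * (r n)⁻¹) * ((1 - 1 / m) * r n) =
      (1 - 1 / m) * (r n - (1 - 1 / m)) := by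
    linear_combination -(1 - 1 / m) ^ 2 * inv_mul_cancel₀ (hr n)
  simp only [Pi.div_apply, hinv, hhalf]
  rw [div_div, hden, add_sub_add_left_eq_sub, ← mul_sub, ← mul_sub, mul_div_mul_left _ _ hL.ne']

end CriticalOrbit

theorem stmt15_general {m : ℝ} (hm : 1 < m) {r p : ℕ → ℝ} (hp : ∀ n, p n < 1)
    (hrec_r : ∀ n, r (n + 1) = r n / (m - (m - 1) * p n))
    (hrec_p : ∀ n, p (n + 1) = 1 - (1 - r (n + 1)) * (1 - r (n + 1) * p n / r n))
    (hrlim : Tendsto r atTop (𝓝 (1 - 1 / m))) :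
    Tendsto
      (fun n : ℕ =>
        (r n - (1 - 1 / m) - 2 / (m * n) +
            4 * (m + 1) * Real.log n / (3 * m * (m - 1) * n ^ 2)) *
          n ^ 2 / Real.log n)
      atTop (𝓝 0) := by
  have hm₀ : 0 < m := zero_lt_one.trans hm
  have hm₁ : m - 1 ≠ 0 := (sub_pos.2 hm).ne'
  have hL : 0 < 1 - 1 / m := sub_pos.2 ((div_lt_one hm₀).2 hm)
  have hgt := lt_orbit hm hp hrec_r hL hrlim
  have hexp := tendsto_sub_mul_sq_div_log_of_tendsto_inv_succ_sub_inv (half_pos hm₀).ne'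
    (fun n => (sub_pos.2 (hgt n)).ne') (tendsto_sub_nhds_zero_iff.2 hrlim)
    (tendsto_orbit_inv_succ_sub_inv hm hp hrec_r hrec_p hrlim)
  have hlim := hexp.add_const (m ^ 2 * (m + 1) / (6 * (m - 1)) / (m / 2) ^ 3)
  rw [neg_add_cancel] at hlim
  refine hlim.congr' ?_
  filter_upwards [eventually_gt_atTop 1] with n hn
  have hn₀ : (n : ℝ) ≠ 0 := Nat.cast_ne_zero.2 (zero_lt_one.trans hn).ne'
  have hlog : Real.log n ≠ 0 := (Real.log_pos (Nat.one_lt_cast.2 hn)).ne'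
  field_simp
  ring

/-- In the critical case (`r_n → 1 - 1/m`), as `n → ∞`:
`r_n = 1 - 1/m + 2/(m n) - 4(m+1) log n/(3 m (m-1) n²) + o(log n / n²)`, i.e.
`(r_n - (1 - 1/m) - 2/(m n) + 4(m+1) log n/(3 m (m-1) n²)) · n²/log n → 0`. -/
theorem stmt15 (m : ℝ) (hm : 1 < m) (r p : ℕ → ℝ)
    (hmem : ∀ n, r n ∈ Set.Ioo (0 : ℝ) 1 ∧ p n ∈ Set.Ioo (0 : ℝ) 1)
    (hrec_r : ∀ n, r (n + 1) = r n / (m - (m - 1) * p n))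
    (hrec_p : ∀ n, p (n + 1) = 1 - (1 - r (n + 1)) * (1 - r (n + 1) * p n / r n))
    (hrlim : Tendsto r atTop (𝓝 (1 - 1 / m))) :
    Tendsto
      (fun n : ℕ =>
        (r n - (1 - 1 / m) - 2 / (m * n) +
            4 * (m + 1) * Real.log n / (3 * m * (m - 1) * n ^ 2)) *
          n ^ 2 / Real.log n)
      atTop (𝓝 0) := by
  exact stmt15_general hm (fun n => (hmem n).2.2) hrec_r hrec_p hrlim
end

section
/- In the critical case (r_n → 1 - 1/m), setting v_n := r_n - (1 - 1/m), one has lim_{n→∞} n^3 (v_n - v_{n+1} - (m/2) v_n v_{n+1}) = 4(m+1)/(3 m (m-1)). -/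
open Filter Finset Topology

/-!
With `c = m - 1`, `u = r / (1 - 1/m) - 1` and `x = (m - 1) (1 - p)`, the recursion becomes
`1 + u n = (1 + u (n + 1)) (1 + x n)` and `x (n + 1) (1 + x n) = x n (1 - c u (n + 1))`, so that
`Δx / Δu = (x n + c u (n + 1)) / (1 + u n)` exactly. The `0/0` form of the Stolz–Cesàro theorem,
applied against `u`, `u²` and `u³` in turn, gives `x = o(u)`, then `x ~ (c/2) u²`, then the
coefficient of `u³` in `x`. Substituting into `u n - u (n + 1) = x n (1 + u (n + 1))` gives the
defect `u n - u (n + 1) - (c/2) u n u (n + 1)` to order `u³`, while `1/u (n + 1) - 1/u n → c/2`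
gives `u n ~ 2 / (c n)`.
-/

theorem eventually_le_of_tendsto_of_eventually_succ_le {α : Type*} [TopologicalSpace α]
    [Preorder α] [ClosedIicTopology α] {f : ℕ → α} {a : α} (hf : Tendsto f atTop (𝓝 a))
    (hanti : ∀ᶠ n in atTop, f (n + 1) ≤ f n) : ∀ᶠ n in atTop, a ≤ f n := by
  obtain ⟨N, hN⟩ := eventually_atTop.1 hanti
  have hf_anti : AntitoneOn f (Set.Ici N) := antitoneOn_nat_Ici_of_succ_le hN
  filter_upwards [eventually_ge_atTop N] with n hn
  refine le_of_tendsto hf ?_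
  filter_upwards [eventually_ge_atTop n] with k hk
  exact hf_anti hn (hn.trans hk) hk

section StolzCesaro

variable {𝕜 : Type*} [Field 𝕜] [LinearOrder 𝕜] [IsStrictOrderedRing 𝕜] [TopologicalSpace 𝕜]
  [OrderTopology 𝕜] {f g : ℕ → 𝕜} {a L : 𝕜}

theorem eventually_le_div_of_eventually_lt_sub_div_sub (hg : StrictAnti g)
    (hf0 : Tendsto f atTop (𝓝 0)) (hg0 : Tendsto g atTop (𝓝 0))
    (h : ∀ᶠ n in atTop, a < (f n - f (n + 1)) / (g n - g (n + 1))) :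
    ∀ᶠ n in atTop, a ≤ f n / g n := by
  have hlim : Tendsto (fun n => f n - a * g n) atTop (𝓝 0) := by
    simpa only [mul_zero, sub_zero] using hf0.sub (hg0.const_mul a)
  have hanti : ∀ᶠ n in atTop, f (n + 1) - a * g (n + 1) ≤ f n - a * g n := by
    filter_upwards [h] with n hn
    rw [lt_div_iff₀ (sub_pos.2 (hg n.lt_succ_self))] at hn
    linarith
  filter_upwards [eventually_le_of_tendsto_of_eventually_succ_le hlim hanti] with n hn
  have hg_pos : 0 < g n := (hg.antitone.le_of_tendsto hg0 (n + 1)).trans_lt (hg n.lt_succ_self)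
  rwa [le_div_iff₀ hg_pos, ← sub_nonneg]

theorem tendsto_div_of_tendsto_sub_div_sub (hg : StrictAnti g)
    (hf0 : Tendsto f atTop (𝓝 0)) (hg0 : Tendsto g atTop (𝓝 0))
    (h : Tendsto (fun n => (f n - f (n + 1)) / (g n - g (n + 1))) atTop (𝓝 L)) :
    Tendsto (fun n => f n / g n) atTop (𝓝 L) := by
  refine tendsto_order.2 ⟨fun a ha => ?_, fun a ha => ?_⟩
  · obtain ⟨b, hab, hbL⟩ := exists_between ha
    filter_upwards [eventually_le_div_of_eventually_lt_sub_div_sub hg hf0 hg0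
      (h.eventually_const_lt hbL)] with n hn
    exact hab.trans_le hn
  · obtain ⟨b, hLb, hba⟩ := exists_between ha
    have hneg : ∀ᶠ n in atTop, -b < (-f n - -f (n + 1)) / (g n - g (n + 1)) := by
      filter_upwards [h.eventually_lt_const hLb] with n hn
      rwa [← neg_sub', neg_div, neg_lt_neg_iff]
    filter_upwards [eventually_le_div_of_eventually_lt_sub_div_sub hg
      (by simpa only [neg_zero] using hf0.neg) hg0 hneg] with n hn
    rw [neg_div, neg_le_neg_iff] at hn
    exact hn.trans_lt hba

end StolzCesaro

theorem tendsto_inv_natCast_smul_of_tendsto_sub {E : Type*} [NormedAddCommGroup E]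
    [NormedSpace ℝ E] {a : ℕ → E} {L : E}
    (h : Tendsto (fun n => a (n + 1) - a n) atTop (𝓝 L)) :
    Tendsto (fun n : ℕ => (n : ℝ)⁻¹ • a n) atTop (𝓝 L) := by
  have hsum := h.cesaro_smul.add
    ((tendsto_inv_atTop_nhds_zero_nat (𝕜 := ℝ)).smul_const (a 0))
  simpa only [sum_range_sub, ← smul_add, sub_add_cancel, zero_smul, add_zero] using hsum

/-- A positive orbit of the recursion for `(r, p)` converging to the critical fixed point
`(1 - 1/m, 1)`, written in the coordinates `u = r / (1 - 1/m) - 1` and `x = (m - 1) (1 - p)`, which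
put the fixed point at the origin and leave `c = m - 1` as the only parameter. -/
structure IsCriticalOrbit (c : ℝ) (u x : ℕ → ℝ) : Prop where
  one_add_pos : ∀ n, 0 < 1 + u n
  snd_pos : ∀ n, 0 < x n
  one_add_eq : ∀ n, 1 + u n = (1 + u (n + 1)) * (1 + x n)
  snd_succ_mul : ∀ n, x (n + 1) * (1 + x n) = x n * (1 - c * u (n + 1))
  tendsto_fst : Tendsto u atTop (𝓝 0)

namespace IsCriticalOrbit

variable {c : ℝ} {u x : ℕ → ℝ}

theorem of_recursion {m : ℝ} (hm : 1 < m) {r p : ℕ → ℝ} (hr : ∀ n, 0 < r n) (hp : ∀ n, p n < 1)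
    (hrec_r : ∀ n, r (n + 1) = r n / (m - (m - 1) * p n))
    (hrec_p : ∀ n, p (n + 1) = 1 - (1 - r (n + 1)) * (1 - r (n + 1) * p n / r n))
    (hrlim : Tendsto r atTop (𝓝 (1 - 1 / m))) :
    IsCriticalOrbit (m - 1) (fun n => r n / (1 - 1 / m) - 1) (fun n => (m - 1) * (1 - p n)) := by
  have hm0 : 0 < m := one_pos.trans hm
  have hm1 : 0 < m - 1 := sub_pos.2 hm
  have hρ : 1 - 1 / m = (m - 1) / m := by field_simp
  have hρ_pos : 0 < 1 - 1 / m := hρ ▸ div_pos hm1 hm0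
  have hx_pos : ∀ n, 0 < (m - 1) * (1 - p n) := fun n => mul_pos hm1 (sub_pos.2 (hp n))
  have hr_eq : ∀ n, r n = r (n + 1) * (1 + (m - 1) * (1 - p n)) := fun n => by
    have hden : m - (m - 1) * p n = 1 + (m - 1) * (1 - p n) := by ring
    rw [hrec_r, hden, div_mul_cancel₀ _ (add_pos one_pos (hx_pos n)).ne']
  refine ⟨fun n => ?_, hx_pos, fun n => ?_, fun n => ?_, ?_⟩
  · rw [add_sub_cancel]
    exact div_pos (hr n) hρ_pos
  · rw [add_sub_cancel, add_sub_cancel, hr_eq n, mul_div_right_comm]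
  · have hr_succ := (hr (n + 1)).ne'
    have hden := (add_pos one_pos (hx_pos n)).ne'
    have hp_succ : (1 - p (n + 1)) * (1 + (m - 1) * (1 - p n)) =
        m * (1 - r (n + 1)) * (1 - p n) := by
      rw [hrec_p, hr_eq n]
      field_simp
      ring
    have hr_succ_eq : 1 - (m - 1) * (r (n + 1) / (1 - 1 / m) - 1) = m * (1 - r (n + 1)) := by
      rw [hρ]
      field_simp
      ring
    rw [hr_succ_eq]
    linear_combination (m - 1) * hp_succ
  · simpa only [div_self hρ_pos.ne', sub_self] using (hrlim.div_const (1 - 1 / m)).sub_const 1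

theorem fst_sub_succ (h : IsCriticalOrbit c u x) (n : ℕ) :
    u n - u (n + 1) = x n * (1 + u (n + 1)) := by
  linear_combination h.one_add_eq n

theorem fst_strictAnti (h : IsCriticalOrbit c u x) : StrictAnti u :=
  strictAnti_nat_of_succ_lt fun n => by
    rw [← sub_pos, h.fst_sub_succ]
    exact mul_pos (h.snd_pos n) (h.one_add_pos (n + 1))

theorem fst_pos (h : IsCriticalOrbit c u x) (n : ℕ) : 0 < u n :=
  (h.fst_strictAnti.antitone.le_of_tendsto h.tendsto_fst (n + 1)).trans_lt
    (h.fst_strictAnti n.lt_succ_self)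

theorem tendsto_fst_succ (h : IsCriticalOrbit c u x) :
    Tendsto (fun n => u (n + 1)) atTop (𝓝 0) :=
  (tendsto_add_atTop_iff_nat 1).2 h.tendsto_fst

theorem tendsto_snd (h : IsCriticalOrbit c u x) : Tendsto x atTop (𝓝 0) := by
  have hlim := (h.tendsto_fst.sub h.tendsto_fst_succ).div (h.tendsto_fst_succ.const_add 1)
    (by simp)
  simp only [sub_self, zero_div] at hlim
  refine hlim.congr fun n => ?_
  rw [Pi.div_apply, h.fst_sub_succ, mul_div_cancel_right₀ _ (h.one_add_pos (n + 1)).ne']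

theorem snd_sub_succ (h : IsCriticalOrbit c u x) (n : ℕ) :
    x n - x (n + 1) = (x n + c * u (n + 1)) / (1 + u n) * (u n - u (n + 1)) := by
  have hu := (h.one_add_pos n).ne'
  have hx := (add_pos one_pos (h.snd_pos n)).ne'
  rw [div_mul_eq_mul_div, eq_div_iff hu]
  refine mul_right_cancel₀ hx ?_
  rw [h.fst_sub_succ, h.one_add_eq n]
  linear_combination (-(1 + u (n + 1)) * (1 + x n)) * h.snd_succ_mul n

theorem tendsto_snd_div_fst (h : IsCriticalOrbit c u x) :
    Tendsto (fun n => x n / u n) atTop (𝓝 0) := by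
  refine tendsto_div_of_tendsto_sub_div_sub h.fst_strictAnti h.tendsto_snd h.tendsto_fst ?_
  have hlim : Tendsto (fun n => (x n + c * u (n + 1)) / (1 + u n)) atTop (𝓝 0) := by
    simpa [Pi.div_def] using (h.tendsto_snd.add (h.tendsto_fst_succ.const_mul c)).div
      (h.tendsto_fst.const_add 1) (by simp)
  refine hlim.congr fun n => ?_
  have hΔ := (sub_pos.2 (h.fst_strictAnti n.lt_succ_self)).ne'
  rw [h.snd_sub_succ, mul_div_cancel_right₀ _ hΔ]

theorem tendsto_fst_succ_div_fst (h : IsCriticalOrbit c u x) :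
    Tendsto (fun n => u (n + 1) / u n) atTop (𝓝 1) := by
  have hlim : Tendsto (fun n => 1 - x n / u n * (1 + u (n + 1))) atTop (𝓝 1) := by
    simpa using (h.tendsto_snd_div_fst.mul (h.tendsto_fst_succ.const_add 1)).const_sub 1
  refine hlim.congr fun n => ?_
  have hu := (h.fst_pos n).ne'
  field_simp
  linear_combination h.fst_sub_succ n

theorem tendsto_snd_div_fst_sq (h : IsCriticalOrbit c u x) :
    Tendsto (fun n => x n / u n ^ 2) atTop (𝓝 (c / 2)) := by
  refine tendsto_div_of_tendsto_sub_div_sub (g := fun n => u n ^ 2)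
    (fun _ _ hab => pow_lt_pow_left₀ (h.fst_strictAnti hab) (h.fst_pos _).le two_ne_zero)
    h.tendsto_snd (by simpa using h.tendsto_fst.pow 2) ?_
  have hlim : Tendsto (fun n => (x n / u n + c * (u (n + 1) / u n)) /
      ((1 + u n) * (1 + u (n + 1) / u n))) atTop (𝓝 ((0 + c * 1) / ((1 + 0) * (1 + 1)))) :=
    (h.tendsto_snd_div_fst.add (h.tendsto_fst_succ_div_fst.const_mul c)).div
      ((h.tendsto_fst.const_add 1).mul (h.tendsto_fst_succ_div_fst.const_add 1)) (by norm_num)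
  convert hlim using 2 with n
  · have hu := h.fst_pos n
    have hΔ := (sub_pos.2 (h.fst_strictAnti n.lt_succ_self)).ne'
    rw [h.snd_sub_succ, sq_sub_sq, mul_div_mul_right _ _ hΔ]
    field_simp
  · norm_num

theorem tendsto_snd_sub_div_fst_cube (h : IsCriticalOrbit c u x) :
    Tendsto (fun n => (x n - c / 2 * u n ^ 2) / u n ^ 3) atTop (𝓝 (-(c * (c + 2) / 12))) := by
  refine tendsto_div_of_tendsto_sub_div_sub (g := fun n => u n ^ 3)
    (fun _ _ hab => pow_lt_pow_left₀ (h.fst_strictAnti hab) (h.fst_pos _).le three_ne_zero)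
    (by simpa using h.tendsto_snd.sub ((h.tendsto_fst.pow 2).const_mul (c / 2)))
    (by simpa using h.tendsto_fst.pow 3) ?_
  have hnum := (h.tendsto_snd_div_fst_sq.sub ((h.tendsto_snd_div_fst_sq.const_mul (c / 2)).mul
    (h.tendsto_fst_succ.const_add 1))).sub
    ((h.tendsto_fst_succ_div_fst.const_add 1).const_mul (c / 2))
  have hden := (h.tendsto_fst.const_add 1).mul
    ((h.tendsto_fst_succ_div_fst.const_add 1).add (h.tendsto_fst_succ_div_fst.pow 2))
  convert hnum.div hden (by norm_num) using 2 with n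
  · have hu := h.fst_pos n
    have hΔ := sub_pos.2 (h.fst_strictAnti n.lt_succ_self)
    have hΔf : x n - c / 2 * u n ^ 2 - (x (n + 1) - c / 2 * u (n + 1) ^ 2) =
        (x n - c / 2 * (x n * (1 + u (n + 1))) - c / 2 * u n * (u n + u (n + 1))) / (1 + u n) *
          (u n - u (n + 1)) := by
      rw [← h.fst_sub_succ]
      have hx := h.snd_sub_succ n
      field_simp at hx ⊢
      linear_combination 2 * hx
    have hΔg : u n ^ 3 - u (n + 1) ^ 3 =
        (u n ^ 2 + u n * u (n + 1) + u (n + 1) ^ 2) * (u n - u (n + 1)) := by ring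
    rw [hΔf, hΔg, mul_div_mul_right _ _ hΔ.ne', Pi.div_apply]
    field_simp
  · ring

theorem tendsto_defect_div_fst_cube (h : IsCriticalOrbit c u x) :
    Tendsto (fun n => (u n - u (n + 1) - c / 2 * (u n * u (n + 1))) / u n ^ 3) atTop
      (𝓝 (c * (c + 2) / 6)) := by
  have hlim := (h.tendsto_snd_sub_div_fst_cube.add
    (h.tendsto_snd_div_fst_sq.mul h.tendsto_fst_succ_div_fst)).add
    ((h.tendsto_snd_div_fst_sq.const_mul (c / 2)).mul (h.tendsto_fst_succ.const_add 1))
  convert hlim using 2 with n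
  · have hu := (h.fst_pos n).ne'
    field_simp
    linear_combination (2 + c * u n) * h.fst_sub_succ n
  · ring

theorem tendsto_inv_fst_succ_sub_inv_fst (h : IsCriticalOrbit c u x) :
    Tendsto (fun n => (u (n + 1))⁻¹ - (u n)⁻¹) atTop (𝓝 (c / 2)) := by
  have hlim : Tendsto (fun n => x n / u n ^ 2 * (1 + u (n + 1)) / (u (n + 1) / u n)) atTop
      (𝓝 (c / 2)) := by
    simpa [Pi.div_def] using (h.tendsto_snd_div_fst_sq.mul (h.tendsto_fst_succ.const_add 1)).div
      h.tendsto_fst_succ_div_fst one_ne_zero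
  refine hlim.congr fun n => ?_
  have hu := (h.fst_pos n).ne'
  have hu_succ := (h.fst_pos (n + 1)).ne'
  rw [inv_sub_inv hu_succ hu, h.fst_sub_succ]
  field_simp

theorem tendsto_natCast_mul_fst (h : IsCriticalOrbit c u x) (hc : c ≠ 0) :
    Tendsto (fun n : ℕ => n * u n) atTop (𝓝 (2 / c)) := by
  have hlim : Tendsto (fun n : ℕ => (n : ℝ)⁻¹ • (u n)⁻¹) atTop (𝓝 (c / 2)) :=
    tendsto_inv_natCast_smul_of_tendsto_sub (a := fun n => (u n)⁻¹)
      h.tendsto_inv_fst_succ_sub_inv_fst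
  simpa [mul_comm] using hlim.inv₀ (div_ne_zero hc two_ne_zero)

theorem tendsto_natCast_cube_mul_defect (h : IsCriticalOrbit c u x) (hc : c ≠ 0) :
    Tendsto (fun n : ℕ => (n : ℝ) ^ 3 * (u n - u (n + 1) - c / 2 * (u n * u (n + 1)))) atTop
      (𝓝 (4 * (c + 2) / (3 * c ^ 2))) := by
  convert ((h.tendsto_natCast_mul_fst hc).pow 3).mul h.tendsto_defect_div_fst_cube using 2 with n
  · have hu := (h.fst_pos n).ne'
    field_simp
  · field_simp
    ring

end IsCriticalOrbit

/-- In the critical case (`r_n → 1 - 1/m`), setting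
`v_n = r_n - (1 - 1/m)`, one has
`n³ (v_n - v_{n+1} - (m/2) v_n v_{n+1}) → 4(m+1)/(3 m (m-1))`. -/
theorem stmt18 (m : ℝ) (hm : 1 < m) (r p : ℕ → ℝ)
    (hmem : ∀ n, r n ∈ Set.Ioo (0 : ℝ) 1 ∧ p n ∈ Set.Ioo (0 : ℝ) 1)
    (hrec_r : ∀ n, r (n + 1) = r n / (m - (m - 1) * p n))
    (hrec_p : ∀ n, p (n + 1) = 1 - (1 - r (n + 1)) * (1 - r (n + 1) * p n / r n))
    (hrlim : Tendsto r atTop (𝓝 (1 - 1 / m)))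
    (v : ℕ → ℝ) (hv : ∀ n, v n = r n - (1 - 1 / m)) :
    Tendsto
      (fun n : ℕ => (n : ℝ) ^ 3 * (v n - v (n + 1) - m / 2 * (v n * v (n + 1))))
      atTop (𝓝 (4 * (m + 1) / (3 * m * (m - 1)))) := by
  have hm1 : m - 1 ≠ 0 := (sub_pos.2 hm).ne'
  have horbit := IsCriticalOrbit.of_recursion hm (fun n => (hmem n).1.1) (fun n => (hmem n).2.2)
    hrec_r hrec_p hrlim
  convert (horbit.tendsto_natCast_cube_mul_defect hm1).const_mul (1 - 1 / m) using 2 with n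
  · have hρ : 1 - 1 / m = (m - 1) / m := by field_simp
    rw [hv, hv, hρ]
    field_simp
  · field_simp
    ring
end
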